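/- arXiv:2203.01328 — 2 statements merged into one kernel-verified Lean document; each statement's English description precedes it below -/
import Mathlib

section
/- Let N > 2 be an integer, Ω ⊂ ℝ^N a nonempty bounded open set with 0 ∈ Ω, and let α < (N−2)/2 be a real number. Then there exists C = C(N, Ω, α) > 0 such that for every λ > 0: ∫_{{x ∈ Ω∖{0} : d(x)|x|^{2+α−N} > λ}} d(x)|x|^{−α} dx ≤ C λ^{−(N−α)/(N−α−2)}; that is, the function x ↦ d(x)|x|^{−α}|x|^{−(N−2−2α)} (the Martin kernel with pole at the interior singular point 0) belongs to the weak Lebesgue space L_w^{(N−α)/(N−α−2)}(Ω∖{0}; d(x)|x|^{−α}). -/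
open MeasureTheory Metric Set

/-!
Since `d ≤ D` on the bounded set `Ω`, the superlevel set `{d |x|^{-q} > t}`, `q = N - 2 - α > 0`,
lies in the ball of radius `(D / t)^{1/q}`. There the weight is at most `D |x|^{-α}`, whose integral
over a ball of radius `r` is a multiple of `r^{N-α}`; for `r = (D / t)^{1/q}` this is a multiple of
`t^{-(N-α)/q}`.
-/

open Module (finrank finrank_pos)

lemma exists_pos_infDist_le_of_isBounded {X : Type*} [PseudoMetricSpace X] {s : Set X}
    (hs : Bornology.IsBounded s) (t : Set X) : ∃ D > 0, ∀ x ∈ s, infDist x t ≤ D := by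
  obtain ⟨D, hD, hle⟩ := ((lipschitz_infDist_pt t).isBounded_image hs).exists_pos_norm_le
  exact ⟨D, hD, fun x hx ↦ (le_abs_self _).trans (hle _ (mem_image_of_mem _ hx))⟩

lemma lt_mul_rpow_neg_iff_lt_div_rpow_inv {D t q y : ℝ} (hD : 0 ≤ D) (ht : 0 < t) (hq : 0 < q)
    (hy : 0 < y) : t < D * y ^ (-q) ↔ y < (D / t) ^ q⁻¹ := by
  rw [Real.lt_rpow_inv_iff_of_pos hy.le (by positivity) hq, lt_div_iff₀ ht, Real.rpow_neg hy.le,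
    ← div_eq_mul_inv, lt_div_iff₀ (by positivity), mul_comm]

lemma superlevel_mul_norm_rpow_subset_ball {E : Type*} [NormedAddCommGroup E] {s : Set E}
    {δ : E → ℝ} {D q t : ℝ} (hD : 0 ≤ D) (hδ : ∀ x ∈ s, δ x ≤ D) (hq : 0 < q) (ht : 0 < t) :
    {x | x ∈ s \ {0} ∧ t < δ x * ‖x‖ ^ (-q)} ⊆ ball 0 ((D / t) ^ q⁻¹) := by
  rintro x ⟨⟨hxs, hx0⟩, hxt⟩
  rw [mem_ball_zero_iff, ← lt_mul_rpow_neg_iff_lt_div_rpow_inv hD ht hq (norm_pos_iff.2 hx0)]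
  exact hxt.trans_le (by gcongr; exact hδ x hxs)

section HaarMeasure

variable {E : Type*} [NormedAddCommGroup E] [NormedSpace ℝ E] [FiniteDimensional ℝ E]
  [Nontrivial E] [MeasurableSpace E] [BorelSpace E] (μ : Measure E) [μ.IsAddHaarMeasure]

lemma setIntegral_ball_fun_norm_addHaar {F : Type*} [NormedAddCommGroup F] [NormedSpace ℝ F]
    (f : ℝ → F) (r : ℝ) :
    ∫ x in ball (0 : E) r, f ‖x‖ ∂μ =
      finrank ℝ E • μ.real (ball 0 1) • ∫ y in Ioo 0 r, y ^ (finrank ℝ E - 1) • f y := by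
  calc ∫ x in ball (0 : E) r, f ‖x‖ ∂μ
      = ∫ x : E, (Iio r).indicator f ‖x‖ ∂μ := by
        rw [← integral_indicator measurableSet_ball]
        simp [indicator]
    _ = finrank ℝ E • μ.real (ball 0 1) •
          ∫ y in Ioi (0 : ℝ), y ^ (finrank ℝ E - 1) • (Iio r).indicator f y :=
        integral_fun_norm_addHaar μ _
    _ = _ := by
        simp only [← indicator_smul, setIntegral_indicator measurableSet_Iio, Ioi_inter_Iio]

lemma setIntegral_ball_norm_rpow {s r : ℝ} (hs : -(finrank ℝ E : ℝ) < s) (hr : 0 ≤ r) :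
    ∫ x in ball (0 : E) r, ‖x‖ ^ s ∂μ =
      finrank ℝ E * μ.real (ball 0 1) / (finrank ℝ E + s) * r ^ (finrank ℝ E + s) := by
  have hds : (finrank ℝ E : ℝ) + s ≠ 0 := by linarith
  have radial_integral : ∫ y in Ioo 0 r, y ^ (finrank ℝ E - 1) * y ^ s =
      r ^ (finrank ℝ E + s) / (finrank ℝ E + s) :=
    calc ∫ y in Ioo 0 r, y ^ (finrank ℝ E - 1) * y ^ s
        = ∫ y in Ioo 0 r, y ^ (finrank ℝ E + s - 1) := by
          refine setIntegral_congr_fun measurableSet_Ioo fun y hy ↦ ?_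
          rw [← Real.rpow_natCast, Nat.cast_pred finrank_pos, ← Real.rpow_add hy.1]
          ring_nf
      _ = ∫ y in 0..r, y ^ (finrank ℝ E + s - 1) := by
          rw [intervalIntegral.integral_of_le hr, integral_Ioc_eq_integral_Ioo]
      _ = r ^ (finrank ℝ E + s) / (finrank ℝ E + s) := by
          rw [integral_rpow (.inl (by linarith)), sub_add_cancel, Real.zero_rpow hds, sub_zero]
  rw [setIntegral_ball_fun_norm_addHaar μ (· ^ s)]
  simp only [smul_eq_mul, nsmul_eq_mul, radial_integral]
  ring

lemma integrableOn_ball_norm_rpow {s : ℝ} (hs : -(finrank ℝ E : ℝ) < s) (r : ℝ) :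
    IntegrableOn (fun x : E ↦ ‖x‖ ^ s) (ball 0 r) μ := by
  refine integrableOn_ball_of_norm_le_rpow (C := 1) (α := -s) finrank_pos (by linarith)
    (.of_forall fun x ↦ ?_) (measurable_norm.pow_const _).aestronglyMeasurable
  rw [one_mul, neg_neg, Real.norm_of_nonneg (by positivity)]

lemma setLIntegral_ball_norm_rpow {s r : ℝ} (hs : -(finrank ℝ E : ℝ) < s) (hr : 0 ≤ r) :
    ∫⁻ x in ball (0 : E) r, ENNReal.ofReal (‖x‖ ^ s) ∂μ =
      ENNReal.ofReal
        (finrank ℝ E * μ.real (ball 0 1) / (finrank ℝ E + s) * r ^ (finrank ℝ E + s)) := by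
  rw [← setIntegral_ball_norm_rpow μ hs hr,
    ofReal_integral_eq_lintegral_ofReal (integrableOn_ball_norm_rpow μ hs r)
      (.of_forall fun x ↦ by positivity)]

lemma setLIntegral_superlevel_mul_norm_rpow_le {s : Set E} {δ : E → ℝ} {D q α t : ℝ}
    (hD : 0 ≤ D) (hδ : ∀ x ∈ s, δ x ≤ D) (hq : 0 < q) (hα : α < finrank ℝ E) (ht : 0 < t) :
    ∫⁻ x in {x | x ∈ s \ {0} ∧ t < δ x * ‖x‖ ^ (-q)}, ENNReal.ofReal (δ x * ‖x‖ ^ (-α)) ∂μ ≤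
      ENNReal.ofReal (D * (finrank ℝ E * μ.real (ball 0 1) / (finrank ℝ E - α)) *
        (D / t) ^ ((finrank ℝ E - α) / q)) := by
  calc ∫⁻ x in {x | x ∈ s \ {0} ∧ t < δ x * ‖x‖ ^ (-q)}, ENNReal.ofReal (δ x * ‖x‖ ^ (-α)) ∂μ
      ≤ ∫⁻ x in {x | x ∈ s \ {0} ∧ t < δ x * ‖x‖ ^ (-q)}, ENNReal.ofReal (D * ‖x‖ ^ (-α)) ∂μ := by
        refine setLIntegral_mono (by fun_prop) fun x hx ↦ ?_
        gcongr
        exact hδ x hx.1.1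
    _ ≤ ∫⁻ x in ball (0 : E) ((D / t) ^ q⁻¹), ENNReal.ofReal (D * ‖x‖ ^ (-α)) ∂μ :=
        lintegral_mono_set (superlevel_mul_norm_rpow_subset_ball hD hδ hq ht)
    _ = ENNReal.ofReal D *
          ∫⁻ x in ball (0 : E) ((D / t) ^ q⁻¹), ENNReal.ofReal (‖x‖ ^ (-α)) ∂μ := by
        simp only [ENNReal.ofReal_mul hD]
        exact lintegral_const_mul' _ _ ENNReal.ofReal_ne_top
    _ = _ := by
        rw [setLIntegral_ball_norm_rpow μ (neg_lt_neg hα) (by positivity), ← ENNReal.ofReal_mul hD,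
          ← Real.rpow_mul (by positivity), inv_mul_eq_div, ← sub_eq_add_neg, mul_assoc]

theorem martin_kernel_weak_estimate_general {Ω : Set E} (hΩ : Bornology.IsBounded Ω) {α : ℝ}
    (hα : α < (finrank ℝ E : ℝ) - 2) :
    ∃ C : ℝ, 0 < C ∧ ∀ t : ℝ, 0 < t →
      (∫⁻ x in {x | x ∈ Ω \ {0} ∧
          t < infDist x (frontier Ω) * ‖x‖ ^ (2 + α - (finrank ℝ E : ℝ))},
        ENNReal.ofReal (infDist x (frontier Ω) * ‖x‖ ^ (-α)) ∂μ)
      ≤ ENNReal.ofReal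
          (C * t ^ (-(((finrank ℝ E : ℝ) - α) / ((finrank ℝ E : ℝ) - α - 2)))) := by
  obtain ⟨D, hD, hδ⟩ := exists_pos_infDist_le_of_isBounded hΩ (frontier Ω)
  set n := (finrank ℝ E : ℝ)
  set p := (n - α) / (n - α - 2)
  have hn : 0 < n := Nat.cast_pos.2 finrank_pos
  have hnα : 0 < n - α := by linarith
  have hball : 0 < μ.real (ball 0 1) :=
    ENNReal.toReal_pos (measure_ball_pos μ 0 one_pos).ne' measure_ball_lt_top.ne
  refine ⟨D * (n * μ.real (ball 0 1) / (n - α)) * D ^ p, by positivity, fun t ht ↦ ?_⟩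
  have hexp : 2 + α - n = -(n - α - 2) := by ring
  rw [hexp, Real.rpow_neg ht.le, mul_assoc _ (D ^ p), ← div_eq_mul_inv, ← Real.div_rpow hD.le ht.le]
  exact setLIntegral_superlevel_mul_norm_rpow_le μ hD.le hδ (by linarith) (by linarith) ht

end HaarMeasure

/-- The Martin-kernel profile `d(x)|x|^{2+α−N}` with pole at the interior singular
point `0` belongs to the weak Lebesgue space
`L_w^{(N−α)/(N−α−2)}(Ω∖{0}; d(x)|x|^{−α})`. -/
theorem martin_kernel_weak_estimate (N : ℕ) (hN : 2 < N)
    (Ω : Set (EuclideanSpace ℝ (Fin N)))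
    (hΩo : IsOpen Ω) (hΩb : Bornology.IsBounded Ω) (h0 : (0 : EuclideanSpace ℝ (Fin N)) ∈ Ω)
    (α : ℝ) (hα : α < ((N : ℝ) - 2) / 2) :
    ∃ C : ℝ, 0 < C ∧ ∀ t : ℝ, 0 < t →
      (∫⁻ x in {x | x ∈ Ω \ {0} ∧ t < infDist x (frontier Ω) * ‖x‖ ^ (2 + α - (N : ℝ))},
        ENNReal.ofReal (infDist x (frontier Ω) * ‖x‖ ^ (-α)))
      ≤ ENNReal.ofReal (C * t ^ (-(((N : ℝ) - α) / ((N : ℝ) - α - 2)))) := by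
  have hN' : (2 : ℝ) < N := mod_cast hN
  have : Nontrivial (EuclideanSpace ℝ (Fin N)) :=
    Module.nontrivial_of_finrank_pos (R := ℝ) (by simp; omega)
  simpa using martin_kernel_weak_estimate_general volume hΩb (α := α) (by simp; linarith)
end

section
/- Let N > 2 be an integer, Ω ⊂ ℝ^N a nonempty bounded open set with 0 ∈ Ω, let 0 < α < (N−2)/2 and 1 < p < (N+1)/(N−1). Then there exists C = C(N, Ω, α, p) > 0 such that for every z ∈ Ω ∖ {0}: ∫_{Ω∖{0}} ( G*(x,z) / ( d(z)|z|^{−α} ) )^p · d(x)|x|^{−α} dx ≤ C, where G*(x,z) = |x−z|^{2−N} · min{1, d(x)d(z)/|x−z|^2} · ( min{1, |x||z|/|x−z|^2} )^{−α}. -/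
open MeasureTheory Metric Set

/-
Write `r = |x - z|` and `s = (N - 1) p - 1`. The normalized kernel splits as

  `r ^ (2 - N) * (min 1 (d(x) d(z) / r²) / d(z)) * (|z| / min 1 (|x| |z| / r²)) ^ α`.

Since `d(x) ≤ d(z) + r`, the boundary factor is at most `2 / r`, and at most `4 / d(x)`, so its
`p`-th power times `d(x)` is `O(r ^ (1 - p))`. Since `|z| ≤ |x| + r`, the base of the last factor is
at most `(|x| + r)² / |x|`. Comparing `r` with `|x|` then bounds the integrand by a multiple of
`|x - z| ^ (-s) + |x| ^ (-s) + |x| ^ (-α (p + 1))`. The two exponents are below the dimension, so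
each term is a locally integrable power of a distance, whose integral over a bounded set is bounded
uniformly in the pole.
-/

section BoundaryFactor

variable {L p r u v : ℝ}

lemma min_one_div_div_le (hL : 0 ≤ L) (hr : 0 < r) (hv : 0 < v) (huv : u ≤ v + L * r) :
    min 1 (u * v / r ^ 2) / v ≤ (1 + L) / r := by
  rw [div_le_div_iff₀ hv hr]
  rcases le_total r v with hrv | hvr
  · calc min 1 (u * v / r ^ 2) * r ≤ 1 * v := by gcongr; exact min_le_left _ _
      _ ≤ (1 + L) * v := by gcongr; linarith
  · have hu : u ≤ (1 + L) * r := by linarith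
    calc min 1 (u * v / r ^ 2) * r ≤ (1 + L) * r * v / r ^ 2 * r := by
          gcongr
          exact (min_le_right _ _).trans (by gcongr)
      _ = (1 + L) * v := by field_simp

lemma min_one_div_div_mul_le (hL : 0 ≤ L) (hr : 0 < r) (hu : 0 ≤ u) (hv : 0 < v)
    (huv : u ≤ v + L * r) : min 1 (u * v / r ^ 2) / v * u ≤ (1 + L) ^ 2 := by
  rcases le_total r v with hrv | hvr
  · have hu' : u ≤ (1 + L) * v := by nlinarith
    calc min 1 (u * v / r ^ 2) / v * u ≤ 1 / v * ((1 + L) * v) := by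
          gcongr
          exact min_le_left _ _
      _ = 1 + L := by field_simp
      _ ≤ (1 + L) ^ 2 := le_self_pow₀ (by linarith) two_ne_zero
  · have hu' : u ≤ (1 + L) * r := by linarith
    calc min 1 (u * v / r ^ 2) / v * u ≤ (1 + L) / r * ((1 + L) * r) := by
          gcongr ?_ * ?_
          exact min_one_div_div_le hL hr hv huv
      _ = (1 + L) ^ 2 := by field_simp

lemma min_one_div_div_rpow_mul_le (hL : 0 ≤ L) (hp : 1 ≤ p) (hr : 0 < r) (hu : 0 ≤ u) (hv : 0 < v)
    (huv : u ≤ v + L * r) :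
    (min 1 (u * v / r ^ 2) / v) ^ p * u ≤ (1 + L) ^ (p + 1) * r ^ (1 - p) := by
  set q := min 1 (u * v / r ^ 2) / v
  have hq : 0 ≤ q := by positivity
  calc q ^ p * u = q ^ (p - 1) * (q * u) := by
        rw [← mul_assoc, ← Real.rpow_add_one' hq (by linarith), sub_add_cancel]
    _ ≤ ((1 + L) / r) ^ (p - 1) * (1 + L) ^ 2 := by
        gcongr
        · exact min_one_div_div_le hL hr hv huv
        · exact min_one_div_div_mul_le hL hr hu hv huv
    _ = (1 + L) ^ (p + 1) * r ^ (1 - p) := by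
        rw [Real.div_rpow (by positivity) hr.le, ← neg_sub p 1, Real.rpow_neg hr.le,
          show p + 1 = p - 1 + (2 : ℕ) by push_cast; ring, Real.rpow_add_natCast (by positivity)]
        ring

end BoundaryFactor

section PoleFactor

variable {D a b r s β γ : ℝ}

lemma div_min_one_le (hr : 0 < r) (ha : 0 < a) (hb : 0 < b) (hba : b ≤ a + r) :
    b / min 1 (a * b / r ^ 2) ≤ (a + r) ^ 2 / a := by
  rcases min_choice 1 (a * b / r ^ 2) with h | h <;> rw [h]
  · rw [div_one, le_div_iff₀ ha]
    nlinarith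
  · rw [show b / (a * b / r ^ 2) = r ^ 2 / a by field_simp]
    gcongr
    linarith

lemma rpow_le_rpow_add_rpow (ha : 0 < a) (har : a ≤ r) (hrD : r ≤ D) (e : ℝ) :
    r ^ e ≤ a ^ e + D ^ e := by
  have hr : 0 < r := ha.trans_le har
  have hD : 0 < D := hr.trans_le hrD
  rcases le_total 0 e with he | he
  · exact (Real.rpow_le_rpow hr.le hrD he).trans (le_add_of_nonneg_left (by positivity))
  · exact (Real.rpow_le_rpow_of_nonpos ha har he).trans (le_add_of_nonneg_right (by positivity))

lemma sq_div_rpow_mul_le_of_le (hγ : γ ≤ β) (hβ : 0 ≤ β) (hr : 0 < r) (hra : r ≤ a)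
    (haD : a ≤ D) :
    ((a + r) ^ 2 / a) ^ β * a ^ (-γ) * r ^ (-s) ≤ 4 ^ β * D ^ (β - γ) * r ^ (-s) := by
  have ha : 0 < a := hr.trans_le hra
  have hbase : (a + r) ^ 2 / a ≤ 4 * a := by
    rw [div_le_iff₀ ha]
    nlinarith
  gcongr ?_ * _
  calc ((a + r) ^ 2 / a) ^ β * a ^ (-γ) ≤ (4 * a) ^ β * a ^ (-γ) := by gcongr
    _ = 4 ^ β * a ^ (β - γ) := by
        rw [Real.mul_rpow (by norm_num) ha.le, mul_assoc, ← Real.rpow_add ha, sub_eq_add_neg]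
    _ ≤ 4 ^ β * D ^ (β - γ) := by gcongr

lemma sq_div_rpow_mul_le_of_ge (hγ : γ ≤ β) (hβ : 0 ≤ β) (ha : 0 < a) (har : a ≤ r)
    (hrD : r ≤ D) :
    ((a + r) ^ 2 / a) ^ β * a ^ (-γ) * r ^ (-s) ≤
      4 ^ β * (D ^ (β - γ) * a ^ (-s) + D ^ (2 * β - s) * a ^ (-(β + γ))) := by
  have hr : 0 < r := ha.trans_le har
  have hbase : (a + r) ^ 2 / a ≤ 4 * (r ^ (2 : ℝ) * a ^ (-1 : ℝ)) := by
    rw [Real.rpow_two, Real.rpow_neg_one, ← div_eq_mul_inv, ← mul_div_assoc]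
    gcongr
    nlinarith
  calc ((a + r) ^ 2 / a) ^ β * a ^ (-γ) * r ^ (-s)
      ≤ (4 * (r ^ (2 : ℝ) * a ^ (-1 : ℝ))) ^ β * a ^ (-γ) * r ^ (-s) := by gcongr
    _ = 4 ^ β * (a ^ (-(β + γ)) * r ^ (2 * β - s)) := by
        rw [Real.mul_rpow (by norm_num) (by positivity), Real.mul_rpow (by positivity)
          (by positivity), ← Real.rpow_mul hr.le, ← Real.rpow_mul ha.le, neg_one_mul, neg_add,
          Real.rpow_add ha, sub_eq_add_neg, Real.rpow_add hr]
        ring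
    _ ≤ 4 ^ β * (a ^ (-(β + γ)) * (a ^ (2 * β - s) + D ^ (2 * β - s))) := by
        gcongr
        exact rpow_le_rpow_add_rpow ha har hrD _
    _ = 4 ^ β * (a ^ (β - γ) * a ^ (-s) + D ^ (2 * β - s) * a ^ (-(β + γ))) := by
        rw [mul_add, ← Real.rpow_add ha, ← Real.rpow_add ha]
        ring_nf
    _ ≤ 4 ^ β * (D ^ (β - γ) * a ^ (-s) + D ^ (2 * β - s) * a ^ (-(β + γ))) := by
        have haD : a ≤ D := har.trans hrD
        gcongr

lemma sq_div_rpow_mul_le (hγ : γ ≤ β) (hβ : 0 ≤ β) (hr : 0 < r) (ha : 0 < a) (hrD : r ≤ D)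
    (haD : a ≤ D) :
    ((a + r) ^ 2 / a) ^ β * a ^ (-γ) * r ^ (-s) ≤
      4 ^ β * (D ^ (β - γ) + D ^ (2 * β - s)) * (r ^ (-s) + a ^ (-s) + a ^ (-(β + γ))) := by
  have hD : 0 < D := hr.trans_le hrD
  have hA : 0 < D ^ (β - γ) := by positivity
  have hB : 0 < D ^ (2 * β - s) := by positivity
  have hrs : 0 < r ^ (-s) := by positivity
  have has : 0 < a ^ (-s) := by positivity
  have hat : 0 < a ^ (-(β + γ)) := by positivity
  rw [mul_assoc (4 ^ β)]
  rcases le_total r a with hra | har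
  · refine (sq_div_rpow_mul_le_of_le hγ hβ hr hra haD).trans ?_
    rw [mul_assoc]
    gcongr <;> linarith
  · refine (sq_div_rpow_mul_le_of_ge hγ hβ ha har hrD).trans ?_
    gcongr
    nlinarith [mul_pos hA hrs, mul_pos hB hrs, mul_pos hB has, mul_pos hA hat]

end PoleFactor

section Integrability

variable {E : Type*} [NormedAddCommGroup E] [MeasurableSpace E] [BorelSpace E] {μ : Measure E}

lemma setLIntegral_ball_dist [μ.IsAddRightInvariant] {f : ℝ → ENNReal} (hf : Measurable f) (w : E)
    (R : ℝ) : ∫⁻ x in ball w R, f (dist x w) ∂μ = ∫⁻ x in ball 0 R, f ‖x‖ ∂μ := by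
  have hpre : (· - w) ⁻¹' ball (0 : E) R = ball w R := by
    ext x
    simp [dist_eq_norm]
  simpa only [hpre, dist_eq_norm, Function.comp_apply] using
    (measurePreserving_sub_right μ w).setLIntegral_comp_preimage
      (measurableSet_ball (x := 0) (ε := R)) (hf.comp measurable_norm)

lemma exists_setLIntegral_rpow_dist_le [NormedSpace ℝ E] [FiniteDimensional ℝ E]
    [μ.IsAddHaarMeasure] {S : Set E} (hS : Bornology.IsBounded S) {t : ℝ}
    (hE : 0 < Module.finrank ℝ E) (ht : t < Module.finrank ℝ E) :
    ∃ I : NNReal, ∀ w ∈ S, ∫⁻ x in S, ENNReal.ofReal (dist x w ^ (-t)) ∂μ ≤ I := by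
  obtain ⟨R, hR⟩ := isBounded_iff.1 hS
  have hint : IntegrableOn (fun x : E ↦ ‖x‖ ^ (-t)) (ball 0 (R + 1)) μ :=
    integrableOn_ball_of_norm_le_rpow (C := 1) hE ht
      (.of_forall fun x ↦ by rw [Real.norm_of_nonneg (by positivity), one_mul])
      (measurable_norm.pow_const _).aestronglyMeasurable
  refine ⟨(∫⁻ x in ball 0 (R + 1), ENNReal.ofReal (‖x‖ ^ (-t)) ∂μ).toNNReal, fun w hw ↦ ?_⟩
  have hsub : S ⊆ ball w (R + 1) := fun x hx ↦ (hR hx hw).trans_lt (lt_add_one R)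
  rw [ENNReal.coe_toNNReal hint.lintegral_lt_top.ne]
  exact (lintegral_mono_set hsub).trans_eq <|
    setLIntegral_ball_dist (f := fun r ↦ ENNReal.ofReal (r ^ (-t))) (by fun_prop) w _

end Integrability

/-- The kernel `G*` on a normed space `E` of dimension `N = finrank ℝ E`, with an arbitrary function
`δ` in place of the distance to the boundary. -/
noncomputable def greenBound {E : Type*} [NormedAddCommGroup E] [NormedSpace ℝ E] (δ : E → ℝ)
    (α : ℝ) (x z : E) : ℝ :=
  dist x z ^ (2 - (Module.finrank ℝ E : ℝ)) * min 1 (δ x * δ z / dist x z ^ 2) *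
    (min 1 (‖x‖ * ‖z‖ / dist x z ^ 2)) ^ (-α)

section GreenBound

variable {E : Type*} [NormedAddCommGroup E] [NormedSpace ℝ E] {δ : E → ℝ} {α p : ℝ}

lemma greenBound_self (x : E) : greenBound δ α x x = 0 := by
  simp [greenBound]

lemma greenBound_div (x z : E) :
    greenBound δ α x z / (δ z * ‖z‖ ^ (-α)) =
      dist x z ^ (2 - (Module.finrank ℝ E : ℝ)) * (min 1 (δ x * δ z / dist x z ^ 2) / δ z) *
        (‖z‖ / min 1 (‖x‖ * ‖z‖ / dist x z ^ 2)) ^ α := by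
  rw [greenBound, Real.rpow_neg (by positivity), Real.rpow_neg (by positivity),
    Real.div_rpow (by positivity) (by positivity)]
  simp only [div_eq_mul_inv, mul_inv, inv_inv]
  ring

lemma greenBound_div_rpow_mul_le {L D : ℝ} {x z : E} (hα : 0 ≤ α) (hp : 1 ≤ p) (hL : 0 ≤ L)
    (hx : x ≠ 0) (hz : z ≠ 0) (hxz : x ≠ z) (hxD : ‖x‖ ≤ D) (hxzD : dist x z ≤ D)
    (hδx : 0 ≤ δ x) (hδz : 0 < δ z) (hδ : δ x ≤ δ z + L * dist x z) :
    (greenBound δ α x z / (δ z * ‖z‖ ^ (-α))) ^ p * (δ x * ‖x‖ ^ (-α)) ≤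
      (1 + L) ^ (p + 1) * (4 ^ (α * p) *
        (D ^ (α * p - α) + D ^ (2 * (α * p) - ((Module.finrank ℝ E - 1) * p - 1)))) *
        (dist x z ^ (-((Module.finrank ℝ E - 1) * p - 1)) +
          ‖x‖ ^ (-((Module.finrank ℝ E - 1) * p - 1)) + ‖x‖ ^ (-(α * p + α))) := by
  have hr : 0 < dist x z := dist_pos.2 hxz
  have ha : 0 < ‖x‖ := norm_pos_iff.2 hx
  have hb : 0 < ‖z‖ := norm_pos_iff.2 hz
  have hba : ‖z‖ ≤ ‖x‖ + dist x z := by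
    simpa only [dist_eq_norm, norm_sub_rev] using norm_le_norm_add_norm_sub x z
  have hboundary := min_one_div_div_rpow_mul_le hL hp hr hδx hδz hδ
  have hpole := div_min_one_le hr ha hb hba
  rw [greenBound_div]
  set n : ℝ := (Module.finrank ℝ E : ℝ)
  set r := dist x z
  set q := min 1 (δ x * δ z / r ^ 2) / δ z
  set m := ‖z‖ / min 1 (‖x‖ * ‖z‖ / r ^ 2)
  have hq : 0 ≤ q := by positivity
  have hm : 0 ≤ m := by positivity
  calc (r ^ (2 - n) * q * m ^ α) ^ p * (δ x * ‖x‖ ^ (-α))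
      = r ^ ((2 - n) * p) * (q ^ p * δ x) * m ^ (α * p) * ‖x‖ ^ (-α) := by
        rw [Real.mul_rpow (by positivity) (by positivity), Real.mul_rpow (by positivity) hq,
          ← Real.rpow_mul hr.le, ← Real.rpow_mul hm]
        ring
    _ ≤ r ^ ((2 - n) * p) * ((1 + L) ^ (p + 1) * r ^ (1 - p)) *
          ((‖x‖ + r) ^ 2 / ‖x‖) ^ (α * p) * ‖x‖ ^ (-α) := by gcongr
    _ = (1 + L) ^ (p + 1) *
          (((‖x‖ + r) ^ 2 / ‖x‖) ^ (α * p) * ‖x‖ ^ (-α) * r ^ (-((n - 1) * p - 1))) := by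
        rw [show -((n - 1) * p - 1) = (2 - n) * p + (1 - p) by ring, Real.rpow_add hr]
        ring
    _ ≤ _ := by
        rw [mul_assoc ((1 + L) ^ (p + 1))]
        gcongr ?_ * ?_
        exact sq_div_rpow_mul_le (le_mul_of_one_le_right hα hp) (by positivity) hr ha hxzD hxD

lemma exists_ofReal_greenBound_le {Ω : Set E} (hΩ : Bornology.IsBounded Ω) {L : NNReal}
    (hδL : LipschitzOnWith L δ Ω) (hδ : ∀ x ∈ Ω, 0 ≤ δ x) (hα : 0 ≤ α) (hp : 1 ≤ p) :
    ∃ K : NNReal, ∀ z ∈ Ω \ {0}, 0 < δ z → ∀ x ∈ Ω \ {0},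
      ENNReal.ofReal ((greenBound δ α x z / (δ z * ‖z‖ ^ (-α))) ^ p * (δ x * ‖x‖ ^ (-α))) ≤
        K * (ENNReal.ofReal (dist x z ^ (-((Module.finrank ℝ E - 1) * p - 1))) +
          ENNReal.ofReal (dist x 0 ^ (-((Module.finrank ℝ E - 1) * p - 1))) +
          ENNReal.ofReal (dist x 0 ^ (-(α * p + α)))) := by
  obtain ⟨D, hD⟩ := isBounded_iff.1 (hΩ.insert 0)
  have hD0 : 0 ≤ D := by simpa using hD (mem_insert 0 Ω) (mem_insert 0 Ω)
  obtain ⟨K, hK⟩ : ∃ K : NNReal, (K : ℝ) = (1 + L) ^ (p + 1) * (4 ^ (α * p) *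
      (D ^ (α * p - α) + D ^ (2 * (α * p) - ((Module.finrank ℝ E - 1) * p - 1)))) :=
    ⟨_, Real.coe_toNNReal _ (by positivity)⟩
  refine ⟨K, ?_⟩
  rintro z ⟨hzΩ, hz⟩ hδz x ⟨hxΩ, hx⟩
  rcases eq_or_ne x z with rfl | hxz
  · simp [greenBound_self, Real.zero_rpow (show p ≠ 0 by linarith)]
  rw [← ENNReal.ofReal_coe_nnreal, ← ENNReal.ofReal_add (by positivity) (by positivity),
    ← ENNReal.ofReal_add (by positivity) (by positivity), ← ENNReal.ofReal_mul (by positivity)]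
  refine ENNReal.ofReal_le_ofReal ?_
  have hxD : dist x 0 ≤ D := hD (mem_insert_of_mem 0 hxΩ) (mem_insert 0 Ω)
  simp only [dist_zero_right, hK] at hxD ⊢
  exact greenBound_div_rpow_mul_le hα hp L.coe_nonneg hx hz hxz hxD
    (hD (mem_insert_of_mem 0 hxΩ) (mem_insert_of_mem 0 hzΩ)) (hδ x hxΩ) hδz
    (hδL.le_add_mul hxΩ hzΩ)

end GreenBound

theorem green_kernel_uniform_Lp_general {E : Type*} [NormedAddCommGroup E] [NormedSpace ℝ E]
    [FiniteDimensional ℝ E] [MeasurableSpace E] [BorelSpace E] (μ : Measure E)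
    [μ.IsAddHaarMeasure] {Ω : Set E} (hΩ : Bornology.IsBounded Ω) {δ : E → ℝ} {L : NNReal}
    (hδL : LipschitzOnWith L δ Ω) (hδ : ∀ x ∈ Ω, 0 ≤ δ x) {α p : ℝ} (hα : 0 ≤ α) (hp : 1 ≤ p)
    (hpE : p * (Module.finrank ℝ E - 1) < Module.finrank ℝ E + 1)
    (hαp : α * (p + 1) < Module.finrank ℝ E) :
    ∃ C : ℝ, 0 < C ∧ ∀ z ∈ Ω \ {0}, 0 < δ z →
      ∫⁻ x in Ω \ {0}, ENNReal.ofReal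
        ((greenBound δ α x z / (δ z * ‖z‖ ^ (-α))) ^ p * (δ x * ‖x‖ ^ (-α))) ∂μ ≤
        ENNReal.ofReal C := by
  have hE : 0 < Module.finrank ℝ E := by
    exact_mod_cast (show 0 ≤ α * (p + 1) by positivity).trans_lt hαp
  obtain ⟨K, hK⟩ := exists_ofReal_greenBound_le hΩ hδL hδ hα hp
  obtain ⟨I, hI⟩ := exists_setLIntegral_rpow_dist_le (μ := μ) (hΩ.insert 0)
    (t := (Module.finrank ℝ E - 1) * p - 1) hE (by linarith)
  obtain ⟨J, hJ⟩ := exists_setLIntegral_rpow_dist_le (μ := μ) (hΩ.insert 0)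
    (t := α * p + α) hE (by linarith)
  refine ⟨(K * (I + I + J) + 1 : NNReal), by positivity, fun z hz hδz ↦ ?_⟩
  have hsub : Ω \ {0} ⊆ insert 0 Ω := sdiff_subset.trans (subset_insert 0 Ω)
  refine (setLIntegral_mono (by fun_prop) (hK z hz hδz)).trans ?_
  rw [lintegral_const_mul _ (by fun_prop), lintegral_add_left (by fun_prop),
    lintegral_add_left (by fun_prop), ENNReal.ofReal_coe_nnreal]
  push_cast
  refine le_add_right ?_
  gcongr
  · exact (lintegral_mono_set hsub).trans (hI z (hsub hz))
  · exact (lintegral_mono_set hsub).trans (hI 0 (mem_insert 0 Ω))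
  · exact (lintegral_mono_set hsub).trans (hJ 0 (mem_insert 0 Ω))

lemma infDist_frontier_pos {E : Type*} [NormedAddCommGroup E] [NormedSpace ℝ E] [Nontrivial E]
    {Ω : Set E} (hΩo : IsOpen Ω) (hΩb : Bornology.IsBounded Ω) {z : E} (hz : z ∈ Ω) :
    0 < infDist z (frontier Ω) := by
  have hne : (frontier Ω).Nonempty :=
    nonempty_frontier_iff.2 ⟨⟨z, hz⟩, fun h ↦ NormedSpace.unbounded_univ ℝ E (h ▸ hΩb)⟩
  refine (isClosed_frontier.notMem_iff_infDist_pos hne).1 fun hzf ↦ ?_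
  exact disjoint_left.1 (disjoint_frontier_iff_isOpen.2 hΩo) hzf hz

lemma mul_add_one_lt_of_lt_critical {n α p : ℝ} (hα : α < (n - 2) / 2) (hp : -1 < p)
    (hpn : p * (n - 1) < n + 1) : α * (p + 1) < n := by
  have hp' : 0 < p + 1 := by linarith
  calc α * (p + 1) < (n - 2) / 2 * (p + 1) := by gcongr
    _ < n := by linarith

/-- Uniform `L^p` bound for the normalized Green kernel of `Δ + μ|x|^{−2}`,
`0 < μ < ((N−2)/2)²`, with respect to the weight `d(x)|x|^{−α}`, uniformly in the
pole `z`, for `1 < p < (N+1)/(N−1)`. -/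
theorem green_kernel_uniform_Lp (N : ℕ) (hN : 2 < N)
    (Ω : Set (EuclideanSpace ℝ (Fin N)))
    (hΩo : IsOpen Ω) (hΩb : Bornology.IsBounded Ω) (h0 : (0 : EuclideanSpace ℝ (Fin N)) ∈ Ω)
    (α p : ℝ) (hα0 : 0 < α) (hα : α < ((N : ℝ) - 2) / 2)
    (hp1 : 1 < p) (hp2 : p < ((N : ℝ) + 1) / ((N : ℝ) - 1)) :
    ∃ C : ℝ, 0 < C ∧ ∀ z ∈ Ω \ ({0} : Set (EuclideanSpace ℝ (Fin N))),
      (∫⁻ x in Ω \ {0}, ENNReal.ofReal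
        (((dist x z ^ (2 - (N : ℝ)) *
            min 1 (infDist x (frontier Ω) * infDist z (frontier Ω) / dist x z ^ 2) *
            (min 1 (‖x‖ * ‖z‖ / dist x z ^ 2)) ^ (-α)) /
          (infDist z (frontier Ω) * ‖z‖ ^ (-α))) ^ p *
          (infDist x (frontier Ω) * ‖x‖ ^ (-α))))
      ≤ ENNReal.ofReal C := by
  have hN1 : (1 : ℝ) < N := by exact_mod_cast one_lt_two.trans hN
  have hpN : p * (N - 1) < N + 1 := (lt_div_iff₀ (sub_pos.2 hN1)).1 hp2
  have : Nontrivial (EuclideanSpace ℝ (Fin N)) :=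
    Module.nontrivial_of_finrank_pos (R := ℝ) (by rw [finrank_euclideanSpace_fin]; omega)
  obtain ⟨C, hC, hbound⟩ := green_kernel_uniform_Lp_general volume hΩb
    ((lipschitz_infDist_pt (frontier Ω)).lipschitzOnWith) (fun _ _ ↦ infDist_nonneg) hα0.le hp1.le
    (by rwa [finrank_euclideanSpace_fin])
    (by simpa using mul_add_one_lt_of_lt_critical hα (by linarith) hpN)
  refine ⟨C, hC, fun z hz ↦ ?_⟩
  simpa only [greenBound, finrank_euclideanSpace_fin] using
    hbound z hz (infDist_frontier_pos hΩo hΩb hz.1)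
end
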